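/- Let μ be a compactly supported probability measure on ℝ^d and let y > 0. Then (1/2) ∑_{i=1}^d ‖ ∂/∂x_i (μ * n_y) ‖₁² ≤ D⁺_y H(μ * n_y), where D⁺_y denotes the right-hand derivative of the function t ↦ H(μ * n_t) at t = y (which exists), and ∂/∂x_i (μ * n_y) denotes the i-th partial derivative of the density of μ * n_y. -/

import Mathlib

open MeasureTheory Real

/-- Density of the centered Gaussian on `ℝ^d` with covariance matrix `y • I`. -/
noncomputable def gaussD (d : ℕ) (y : ℝ) (x : EuclideanSpace ℝ (Fin d)) : ℝ :=
  (2 * Real.pi * y) ^ (-(d : ℝ) / 2) * Real.exp (-‖x‖ ^ 2 / (2 * y))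

/-- The density of `μ * n_y`. -/
noncomputable def convG (d : ℕ) (μ : Measure (EuclideanSpace ℝ (Fin d))) (y : ℝ)
    (x : EuclideanSpace ℝ (Fin d)) : ℝ :=
  ∫ z, gaussD d y (x - z) ∂μ

/-- The differential entropy `H(μ * n_y) = ∫ -f log f` where `f` is the density of `μ * n_y`. -/
noncomputable def entG (d : ℕ) (μ : Measure (EuclideanSpace ℝ (Fin d))) (y : ℝ) : ℝ :=
  ∫ x, Real.negMulLog (convG d μ y x)

section aux

variable {d : ℕ}

lemma gaussD_pos {t : ℝ} (ht : 0 < t) (w : EuclideanSpace ℝ (Fin d)) : 0 < gaussD d t w := by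
  unfold gaussD; positivity

lemma gaussD_cont (t : ℝ) : Continuous (gaussD d t) := by
  unfold gaussD; fun_prop

lemma gaussD_bound (d : ℕ) {y : ℝ} (hy : 0 < y) : ∃ C : ℝ, 0 ≤ C ∧ ∀ t ∈ Set.Icc (y / 2) (2 * y),
    ∀ w : EuclideanSpace ℝ (Fin d),
      (1 + ‖w‖ ^ 2) * gaussD d t w ≤ C * exp (-(‖w‖ ^ 2 / (8 * y))) := by
  refine ⟨(1 + 8 * y) * (π * y) ^ (-(d : ℝ) / 2), by positivity, ?_⟩
  rintro t ⟨h1, h2⟩ w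
  have ht : 0 < t := by linarith
  have hA : (2 * π * t) ^ (-(d : ℝ) / 2) ≤ (π * y) ^ (-(d : ℝ) / 2) := by
    apply Real.rpow_le_rpow_of_nonpos (by positivity)
    · nlinarith [Real.pi_pos]
    · have : (0 : ℝ) ≤ d := by positivity
      linarith
  set s := ‖w‖ ^ 2 with hs
  have hs0 : 0 ≤ s := by positivity
  have hB : 1 + s ≤ (1 + 8 * y) * exp (s / (8 * y)) := by
    have h := Real.add_one_le_exp (s / (8 * y))
    have h3 : 0 ≤ s / (8 * y) := by positivity
    have h4 : s = 8 * y * (s / (8 * y)) := by field_simp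
    calc 1 + s ≤ (1 + 8 * y) * (s / (8 * y) + 1) := by nlinarith
      _ ≤ _ := by gcongr
  have hE : exp (-s / (2 * t)) ≤ exp (-(s / (8 * y)) - s / (8 * y)) := by
    apply Real.exp_le_exp.2
    have : s / (4 * y) ≤ s / (2 * t) := by
      apply div_le_div_of_nonneg_left hs0 (by positivity) (by linarith)
    have h5 : s / (4 * y) = s / (8 * y) + s / (8 * y) := by field_simp; ring
    have h6 : -s / (2 * t) = - (s / (2 * t)) := by ring
    linarith
  unfold gaussD
  calc (1 + s) * ((2 * π * t) ^ (-(d : ℝ) / 2) * exp (-s / (2 * t)))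
      ≤ ((1 + 8 * y) * exp (s / (8 * y))) * ((π * y) ^ (-(d : ℝ) / 2) *
          exp (-(s / (8 * y)) - s / (8 * y))) := by gcongr
    _ = (1 + 8 * y) * (π * y) ^ (-(d : ℝ) / 2) *
          (exp (s / (8 * y)) * exp (-(s / (8 * y)) - s / (8 * y))) := by ring
    _ = _ := by rw [← Real.exp_add]; ring_nf

/-- admissible weights -/
def Adm (p : EuclideanSpace ℝ (Fin d) → ℝ) : Prop :=
  Continuous p ∧ ∃ A : ℝ, 0 ≤ A ∧ ∀ w, |p w| ≤ A * (1 + ‖w‖ ^ 2)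

lemma adm_one : Adm (fun _ : EuclideanSpace ℝ (Fin d) => (1 : ℝ)) :=
  ⟨continuous_const, 1, zero_le_one, fun w => by
    rw [abs_one]; nlinarith [sq_nonneg ‖w‖]⟩

lemma abs_coord_le (w : EuclideanSpace ℝ (Fin d)) (i : Fin d) : |w i| ≤ ‖w‖ := by
  simpa using PiLp.norm_apply_le w i

lemma adm_coord (i : Fin d) : Adm (fun w : EuclideanSpace ℝ (Fin d) => w i) :=
  ⟨by fun_prop, 1, zero_le_one, fun w => by
    have := abs_coord_le w i
    nlinarith [sq_nonneg (‖w‖ - 1), norm_nonneg w]⟩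

lemma adm_coord_sq (i : Fin d) : Adm (fun w : EuclideanSpace ℝ (Fin d) => (w i) ^ 2) :=
  ⟨by fun_prop, 1, zero_le_one, fun w => by
    have := abs_coord_le w i
    rw [abs_pow]
    nlinarith [abs_nonneg (w i), norm_nonneg w]⟩

lemma adm_normsq : Adm (fun w : EuclideanSpace ℝ (Fin d) => ‖w‖ ^ 2) :=
  ⟨by fun_prop, 1, zero_le_one, fun w => by
    rw [abs_of_nonneg (by positivity)]; linarith⟩

/-- weighted convolution -/
noncomputable def Wc (μ : Measure (EuclideanSpace ℝ (Fin d)))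
    (p : EuclideanSpace ℝ (Fin d) → ℝ) (t : ℝ) (x : EuclideanSpace ℝ (Fin d)) : ℝ :=
  ∫ z, p (x - z) * gaussD d t (x - z) ∂μ

lemma convG_eq (μ : Measure (EuclideanSpace ℝ (Fin d))) (t : ℝ) :
    convG d μ t = Wc μ (fun _ => 1) t := by
  funext x; simp [convG, Wc]

lemma adm_bound {p : EuclideanSpace ℝ (Fin d) → ℝ} (hp : Adm p) {y : ℝ} (hy : 0 < y) :
    ∃ C : ℝ, 0 ≤ C ∧ ∀ t ∈ Set.Icc (y / 2) (2 * y), ∀ w, |p w * gaussD d t w| ≤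
      C * exp (-(‖w‖ ^ 2 / (8 * y))) := by
  obtain ⟨C, hC, h⟩ := gaussD_bound d hy
  obtain ⟨_, A, hA, hpA⟩ := hp
  refine ⟨A * C, by positivity, fun t ht w => ?_⟩
  have ht0 : 0 < t := by linarith [ht.1]
  rw [abs_mul, abs_of_pos (gaussD_pos ht0 w)]
  calc |p w| * gaussD d t w ≤ A * (1 + ‖w‖ ^ 2) * gaussD d t w := by
        exact mul_le_mul_of_nonneg_right (hpA w) (gaussD_pos ht0 w).le
    _ = A * ((1 + ‖w‖ ^ 2) * gaussD d t w) := by ring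
    _ ≤ A * (C * exp (-(‖w‖ ^ 2 / (8 * y)))) := by
        exact mul_le_mul_of_nonneg_left (h t ht w) hA
    _ = _ := by ring

lemma adm_bound' {p : EuclideanSpace ℝ (Fin d) → ℝ} (hp : Adm p) {y : ℝ} (hy : 0 < y) :
    ∃ C : ℝ, 0 ≤ C ∧ ∀ t ∈ Set.Icc (y / 2) (2 * y), ∀ w, |p w * gaussD d t w| ≤ C := by
  obtain ⟨C, hC, h⟩ := adm_bound hp hy
  refine ⟨C, hC, fun t ht w => (h t ht w).trans ?_⟩
  have : exp (-(‖w‖ ^ 2 / (8 * y))) ≤ 1 := by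
    apply Real.exp_le_one_iff.2
    have : 0 ≤ ‖w‖ ^ 2 / (8 * y) := by positivity
    linarith
  nlinarith

lemma mem_Icc_self' {y : ℝ} (hy : 0 < y) : y ∈ Set.Icc (y / 2) (2 * y) :=
  ⟨by linarith, by linarith⟩

lemma Icc_nhds' {y : ℝ} (hy : 0 < y) : Set.Icc (y / 2) (2 * y) ∈ nhds y :=
  Icc_mem_nhds (by linarith) (by linarith)

variable (μ : Measure (EuclideanSpace ℝ (Fin d))) [IsProbabilityMeasure μ]

lemma integrand_cont {p : EuclideanSpace ℝ (Fin d) → ℝ} (hp : Adm p) (t : ℝ)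
    (x : EuclideanSpace ℝ (Fin d)) : Continuous fun z => p (x - z) * gaussD d t (x - z) := by
  have h1 := hp.1
  have h2 := gaussD_cont (d := d) t
  fun_prop

lemma integrand_int {p : EuclideanSpace ℝ (Fin d) → ℝ} (hp : Adm p) {t : ℝ} (ht : 0 < t)
    (x : EuclideanSpace ℝ (Fin d)) : Integrable (fun z => p (x - z) * gaussD d t (x - z)) μ := by
  obtain ⟨C, hC, h⟩ := adm_bound' hp ht
  exact (integrable_const C).mono' (integrand_cont hp t x).aestronglyMeasurable
    (.of_forall fun z => h t (mem_Icc_self' ht) _)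

lemma Wc_cont {p : EuclideanSpace ℝ (Fin d) → ℝ} (hp : Adm p) {t : ℝ} (ht : 0 < t) :
    Continuous (Wc μ p t) := by
  obtain ⟨C, hC, h⟩ := adm_bound' hp ht
  refine continuous_of_dominated (bound := fun _ => C)
    (fun x => (integrand_cont hp t x).aestronglyMeasurable)
    (fun x => .of_forall fun z => h t (mem_Icc_self' ht) _) (integrable_const C)
    (.of_forall fun z => ?_)
  have h1 := hp.1
  have h2 := gaussD_cont (d := d) t
  fun_prop

lemma gaussD_deriv_t {t : ℝ} (ht : 0 < t) (w : EuclideanSpace ℝ (Fin d)) :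
    HasDerivAt (fun s => gaussD d s w)
      ((1 / (2 * t ^ 2) * ‖w‖ ^ 2 - d / (2 * t)) * gaussD d t w) t := by
  unfold gaussD
  have h1 : HasDerivAt (fun s : ℝ => 2 * π * s) (2 * π) t := by
    simpa using (hasDerivAt_id t).const_mul (2 * π)
  have h2 := h1.rpow_const (p := -(d : ℝ) / 2) (Or.inl (by positivity))
  have h3 : HasDerivAt (fun s : ℝ => -‖w‖ ^ 2 / (2 * s)) (‖w‖ ^ 2 / (2 * t ^ 2)) t := by
    have := ((hasDerivAt_const t (-‖w‖ ^ 2)).div ((hasDerivAt_id t).const_mul 2)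
      (by simpa using ht.ne'))
    convert! this using 1
    simp; field_simp
  convert! h2.mul h3.exp using 1
  rw [Real.rpow_sub_one (by positivity)]
  field_simp; ring

lemma Wc_deriv_t {t : ℝ} (ht : 0 < t) (x : EuclideanSpace ℝ (Fin d)) :
    HasDerivAt (fun s => Wc μ (fun _ => 1) s x)
      (1 / (2 * t ^ 2) * Wc μ (fun w => ‖w‖ ^ 2) t x - d / (2 * t) * Wc μ (fun _ => 1) t x) t := by
  obtain ⟨C1, hC1, h1⟩ := adm_bound' (d := d) adm_one ht
  obtain ⟨C2, hC2, h2⟩ := adm_bound' (d := d) adm_normsq ht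
  have key := hasDerivAt_integral_of_dominated_loc_of_deriv_le (μ := μ) (x₀ := t)
    (F := fun s z => 1 * gaussD d s (x - z))
    (F' := fun s z => (1 / (2 * s ^ 2) * ‖x - z‖ ^ 2 - d / (2 * s)) * gaussD d s (x - z))
    (bound := fun _ => 1 / (2 * (t / 2) ^ 2) * C2 + d / (2 * (t / 2)) * C1)
    (Icc_nhds' ht)
    (.of_forall fun s => (integrand_cont adm_one s x).aestronglyMeasurable)
    (integrand_int μ adm_one ht x) ?_ ?_ (integrable_const _) ?_
  · convert! key.2 using 1
    unfold Wc
    rw [← integral_const_mul, ← integral_const_mul, ← integral_sub]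
    · congr 1; funext z; ring
    · exact (integrand_int μ adm_normsq ht x).const_mul _
    · exact (integrand_int μ adm_one ht x).const_mul _
  · have h2 := gaussD_cont (d := d) t
    exact Continuous.aestronglyMeasurable (by fun_prop)
  · refine .of_forall fun z s hs => ?_
    have e : (1 / (2 * s ^ 2) * ‖x - z‖ ^ 2 - d / (2 * s)) * gaussD d s (x - z) =
      1 / (2 * s ^ 2) * (‖x - z‖ ^ 2 * gaussD d s (x - z)) - d / (2 * s) * (1 * gaussD d s (x - z)) := by
      ring
    have hs0 : 0 < s := by linarith [hs.1]
    rw [Real.norm_eq_abs, e]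
    refine (abs_sub _ _).trans ?_
    rw [abs_mul, abs_mul (_ / _), abs_of_nonneg (by positivity : 0 ≤ 1 / (2 * s ^ 2)),
      abs_of_nonneg (by positivity : 0 ≤ (d : ℝ) / (2 * s))]
    have a1 := h1 s hs (x - z)
    have a2 := h2 s hs (x - z)
    have := hs.1
    gcongr
  · refine .of_forall fun z s hs => ?_
    have hs0 : 0 < s := by linarith [hs.1]
    simpa using gaussD_deriv_t hs0 (x - z)

lemma gaussD_line {t : ℝ} (ht : 0 < t) (w : EuclideanSpace ℝ (Fin d)) (i : Fin d) (s : ℝ) :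
    HasDerivAt (fun s : ℝ => gaussD d t (w + s • EuclideanSpace.single i 1))
      (-(1 / t) * ((w + s • EuclideanSpace.single i (1 : ℝ)) i *
        gaussD d t (w + s • EuclideanSpace.single i 1))) s := by
  unfold gaussD
  have h1 : HasDerivAt (fun s : ℝ => w + s • EuclideanSpace.single i (1 : ℝ))
      (EuclideanSpace.single i (1 : ℝ)) s := by
    simpa using ((hasDerivAt_id s).smul_const (EuclideanSpace.single i (1 : ℝ))).const_add w
  have h2 := h1.norm_sq
  have h3 := ((h2.neg.div_const (2 * t)).exp).const_mul ((2 * π * t) ^ (-(d : ℝ) / 2))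
  convert! h3 using 1
  rw [EuclideanSpace.inner_single_right]
  simp
  field_simp

lemma line_coord (w : EuclideanSpace ℝ (Fin d)) (i : Fin d) (s : ℝ) :
    HasDerivAt (fun s : ℝ => (w + s • EuclideanSpace.single i (1 : ℝ)) i) 1 s := by
  simpa using (hasDerivAt_id s).const_add (w i)

lemma Wc_line_one {t : ℝ} (ht : 0 < t) (x : EuclideanSpace ℝ (Fin d)) (i : Fin d) :
    HasLineDerivAt ℝ (Wc μ (fun _ => 1) t) (-(1 / t) * Wc μ (fun w => w i) t x) x
      (EuclideanSpace.single i 1) := by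
  unfold HasLineDerivAt
  obtain ⟨C1, hC1, h1⟩ := adm_bound' (adm_coord i) ht
  have sw (z) (s : ℝ) : x + s • EuclideanSpace.single i (1 : ℝ) - z =
    (x - z) + s • EuclideanSpace.single i 1 := by abel
  have key := hasDerivAt_integral_of_dominated_loc_of_deriv_le (μ := μ) (x₀ := (0 : ℝ))
    (F := fun s z => 1 * gaussD d t (x + s • EuclideanSpace.single i 1 - z))
    (F' := fun s z => -(1 / t) * ((x + s • EuclideanSpace.single i (1 : ℝ) - z) i *
        gaussD d t (x + s • EuclideanSpace.single i 1 - z)))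
    (bound := fun _ => (1 / t) * C1)
    Filter.univ_mem
    (.of_forall fun s => (integrand_cont adm_one t _).aestronglyMeasurable)
    (integrand_int μ adm_one ht _) ?_ ?_ (integrable_const _) ?_
  · convert! key.2 using 1
    unfold Wc
    rw [← integral_const_mul]
    simp
  · exact ((integrand_cont (adm_coord i) t _).const_mul _).aestronglyMeasurable
  · refine .of_forall fun z s hs => ?_
    rw [Real.norm_eq_abs, abs_mul, abs_neg, abs_of_pos (by positivity : 0 < 1 / t)]
    have := h1 t (mem_Icc_self' ht) (x + s • EuclideanSpace.single i (1 : ℝ) - z)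
    gcongr
  · refine .of_forall fun z s hs => ?_
    simp only [sw, one_mul]
    exact gaussD_line ht (x - z) i s

lemma Wc_line_coord {t : ℝ} (ht : 0 < t) (x : EuclideanSpace ℝ (Fin d)) (i : Fin d) :
    HasLineDerivAt ℝ (Wc μ (fun w => w i) t)
      (Wc μ (fun _ => 1) t x - (1 / t) * Wc μ (fun w => (w i) ^ 2) t x) x
      (EuclideanSpace.single i 1) := by
  unfold HasLineDerivAt
  obtain ⟨C1, hC1, h1⟩ := adm_bound' (d := d) adm_one ht
  obtain ⟨C2, hC2, h2⟩ := adm_bound' (adm_coord_sq i) ht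
  have sw (z) (s : ℝ) : x + s • EuclideanSpace.single i (1 : ℝ) - z =
    (x - z) + s • EuclideanSpace.single i 1 := by abel
  have key := hasDerivAt_integral_of_dominated_loc_of_deriv_le (μ := μ) (x₀ := (0 : ℝ))
    (F := fun s z => (x + s • EuclideanSpace.single i (1 : ℝ) - z) i *
      gaussD d t (x + s • EuclideanSpace.single i 1 - z))
    (F' := fun s z => 1 * gaussD d t (x + s • EuclideanSpace.single i 1 - z) -
      (1 / t) * ((x + s • EuclideanSpace.single i (1 : ℝ) - z) i ^ 2 *
        gaussD d t (x + s • EuclideanSpace.single i 1 - z)))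
    (bound := fun _ => C1 + (1 / t) * C2)
    Filter.univ_mem
    (.of_forall fun s => (integrand_cont (adm_coord i) t _).aestronglyMeasurable)
    (integrand_int μ (adm_coord i) ht _) ?_ ?_ (integrable_const _) ?_
  · convert! key.2 using 1
    unfold Wc
    rw [← integral_const_mul, ← integral_sub]
    · simp
    · exact integrand_int μ adm_one ht x
    · exact (integrand_int μ (adm_coord_sq i) ht x).const_mul _
  · exact ((integrand_cont adm_one t _).sub
      ((integrand_cont (adm_coord_sq i) t _).const_mul _)).aestronglyMeasurable
  · refine .of_forall fun z s hs => ?_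
    rw [Real.norm_eq_abs]
    refine (abs_sub _ _).trans ?_
    rw [abs_mul (1 / t), abs_of_pos (by positivity : 0 < 1 / t)]
    have a2 := h2 t (mem_Icc_self' ht) (x + s • EuclideanSpace.single i (1 : ℝ) - z)
    have a1 := h1 t (mem_Icc_self' ht) (x + s • EuclideanSpace.single i (1 : ℝ) - z)
    gcongr
  · refine .of_forall fun z s hs => ?_
    simp only [sw]
    convert! (line_coord (x - z) i s).mul (gaussD_line ht (x - z) i s) using 1
    ring

lemma Wc_sum_sq {t : ℝ} (ht : 0 < t) (x : EuclideanSpace ℝ (Fin d)) :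
    Wc μ (fun w => ‖w‖ ^ 2) t x = ∑ i, Wc μ (fun w => (w i) ^ 2) t x := by
  unfold Wc
  rw [← integral_finsetSum _ fun i _ => integrand_int μ (adm_coord_sq i) ht x]
  congr 1; funext z
  simp only [EuclideanSpace.norm_sq_eq, Finset.sum_mul, Real.norm_eq_abs, sq_abs]

lemma Wc_pos {t : ℝ} (ht : 0 < t) (x : EuclideanSpace ℝ (Fin d)) : 0 < Wc μ (fun _ => 1) t x := by
  unfold Wc
  have hpos : ∀ z, 0 < 1 * gaussD d t (x - z) := fun z => by
    rw [one_mul]; exact gaussD_pos ht _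
  rw [integral_pos_iff_support_of_nonneg (fun z => (hpos z).le) (integrand_int μ adm_one ht x)]
  have : Function.support (fun z => 1 * gaussD d t (x - z)) = Set.univ :=
    Set.eq_univ_of_forall fun z => (hpos z).ne'
  rw [this]; simp

variable {R : ℝ} (hR : 0 ≤ R) (hμR : ∀ᵐ z ∂μ, ‖z‖ ≤ R)

lemma norm_sq_le_of {x z : EuclideanSpace ℝ (Fin d)} {R : ℝ} (hz : ‖z‖ ≤ R) :
    ‖x‖ ^ 2 ≤ 2 * ‖x - z‖ ^ 2 + 2 * R ^ 2 := by
  have h : ‖x‖ ≤ ‖x - z‖ + ‖z‖ := by simpa using norm_add_le (x - z) z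
  have h2 : ‖x‖ ≤ ‖x - z‖ + R := by linarith
  have := norm_nonneg x
  nlinarith [sq_nonneg (‖x - z‖ - R)]

lemma norm_sub_sq_le_of {x z : EuclideanSpace ℝ (Fin d)} {R : ℝ} (hz : ‖z‖ ≤ R) :
    ‖x - z‖ ^ 2 ≤ 2 * ‖x‖ ^ 2 + 2 * R ^ 2 := by
  have h : ‖x - z‖ ≤ ‖x‖ + ‖z‖ := norm_sub_le x z
  have h2 : ‖x - z‖ ≤ ‖x‖ + R := by linarith
  have := norm_nonneg (x - z)
  nlinarith [sq_nonneg (‖x‖ - R)]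

lemma adm_bound_x {p : EuclideanSpace ℝ (Fin d) → ℝ} (hp : Adm p) {y : ℝ} (hy : 0 < y) (R : ℝ) :
    ∃ C : ℝ, 0 ≤ C ∧ ∀ t ∈ Set.Icc (y / 2) (2 * y), ∀ x z : EuclideanSpace ℝ (Fin d), ‖z‖ ≤ R →
      |p (x - z) * gaussD d t (x - z)| ≤ C * exp (-(‖x‖ ^ 2 / (16 * y))) := by
  obtain ⟨C, hC, h⟩ := adm_bound hp hy
  refine ⟨C * exp (R ^ 2 / (8 * y)), by positivity, fun t ht x z hz => (h t ht _).trans ?_⟩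
  rw [mul_assoc, ← Real.exp_add]
  gcongr
  have := norm_sq_le_of (x := x) hz
  have h2 : ‖x‖ ^ 2 / (16 * y) ≤ (2 * ‖x - z‖ ^ 2 + 2 * R ^ 2) / (16 * y) := by gcongr
  have h3 : (2 * ‖x - z‖ ^ 2 + 2 * R ^ 2) / (16 * y) = ‖x - z‖ ^ 2 / (8 * y) + R ^ 2 / (8 * y) := by
    field_simp; ring
  linarith

include hμR in
lemma Wc_bound {p : EuclideanSpace ℝ (Fin d) → ℝ} (hp : Adm p) {y : ℝ} (hy : 0 < y) :
    ∃ C : ℝ, 0 ≤ C ∧ ∀ t ∈ Set.Icc (y / 2) (2 * y), ∀ x,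
      |Wc μ p t x| ≤ C * exp (-(‖x‖ ^ 2 / (16 * y))) := by
  obtain ⟨C, hC, h⟩ := adm_bound_x hp hy R
  refine ⟨C, hC, fun t ht x => ?_⟩
  have := norm_integral_le_of_norm_le_const (μ := μ)
    (f := fun z => p (x - z) * gaussD d t (x - z)) (hμR.mono fun z hz => h t ht x z hz)
  simpa [Wc] using this

include hμR in
lemma Wc_lower {y : ℝ} (hy : 0 < y) :
    ∃ c b : ℝ, 0 < c ∧ 0 ≤ b ∧ ∀ t ∈ Set.Icc (y / 2) (2 * y), ∀ x,
      c * exp (-(b * ‖x‖ ^ 2)) ≤ Wc μ (fun _ => 1) t x := by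
  refine ⟨(2 * π * (2 * y)) ^ (-(d : ℝ) / 2) * exp (-(2 * R ^ 2 / y)), 2 / y, by positivity,
    by positivity, fun t ht x => ?_⟩
  have ht0 : 0 < t := by linarith [ht.1]
  have e : ∀ c : ℝ, c = ∫ z, c ∂μ := fun c => by simp
  rw [e (_ * exp (-(2 / y * ‖x‖ ^ 2)))]
  unfold Wc
  refine integral_mono_ae (integrable_const _) (integrand_int μ adm_one ht0 x)
    (hμR.mono fun z hz => ?_)
  simp only [one_mul, gaussD]
  rw [mul_assoc, ← Real.exp_add]
  have h1 := norm_sub_sq_le_of (x := x) hz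
  have h2 : ‖x - z‖ ^ 2 / (2 * t) ≤ (2 * ‖x‖ ^ 2 + 2 * R ^ 2) / y := by
    apply div_le_div₀ (by positivity) h1 hy (by linarith [ht.1])
  have h3 : (2 * ‖x‖ ^ 2 + 2 * R ^ 2) / y = 2 / y * ‖x‖ ^ 2 + 2 * R ^ 2 / y := by ring
  have h4 : -‖x - z‖ ^ 2 / (2 * t) = -(‖x - z‖ ^ 2 / (2 * t)) := by ring
  have h5 : (2 * π * (2 * y)) ^ (-(d : ℝ) / 2) ≤ (2 * π * t) ^ (-(d : ℝ) / 2) := by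
    apply Real.rpow_le_rpow_of_nonpos (by positivity)
    · have := ht.2
      gcongr
    · have : (0 : ℝ) ≤ d := by positivity
      linarith
  have h6 : exp (-(2 * R ^ 2 / y) + -(2 / y * ‖x‖ ^ 2)) ≤ exp (-‖x - z‖ ^ 2 / (2 * t)) :=
    Real.exp_le_exp.2 (by linarith)
  gcongr

include hμR in
lemma log_bound {y : ℝ} (hy : 0 < y) :
    ∃ A : ℝ, 0 ≤ A ∧ ∀ t ∈ Set.Icc (y / 2) (2 * y), ∀ x,
      |-Real.log (Wc μ (fun _ => 1) t x) - 1| ≤ A * (1 + ‖x‖ ^ 2) := by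
  obtain ⟨c, b, hc, hb, h⟩ := Wc_lower μ hμR hy
  obtain ⟨C, hC, h'⟩ := Wc_bound μ hμR adm_one hy
  refine ⟨|Real.log C| + |Real.log c| + b + 1, by positivity, fun t ht x => ?_⟩
  have ht0 : 0 < t := by linarith [ht.1]
  have hpos := Wc_pos μ ht0 x
  have h1 := h t ht x
  have h2 := (le_abs_self _).trans (h' t ht x)
  have h3 : exp (-(‖x‖ ^ 2 / (16 * y))) ≤ 1 := by
    apply Real.exp_le_one_iff.2
    have : 0 ≤ ‖x‖ ^ 2 / (16 * y) := by positivity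
    linarith
  have h4 : Wc μ (fun _ => 1) t x ≤ C := by nlinarith
  have l1 := Real.log_le_log hpos h4
  have l2 := Real.log_le_log (by positivity) h1
  rw [Real.log_mul hc.ne' (Real.exp_pos _).ne', Real.log_exp] at l2
  have a1 := le_abs_self (Real.log C)
  have a2 := neg_abs_le (Real.log c)
  have a3 := abs_nonneg (Real.log c)
  have a4 := abs_nonneg (Real.log C)
  have s0 : 0 ≤ ‖x‖ ^ 2 := by positivity
  have m1 := mul_nonneg a3 s0
  have m2 := mul_nonneg a4 s0
  have m3 := mul_nonneg hb s0
  rw [abs_le]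
  constructor <;> nlinarith

include hR hμR in
lemma coord_bound {t : ℝ} (ht : 0 < t) (x : EuclideanSpace ℝ (Fin d)) (i : Fin d) :
    |Wc μ (fun w => w i) t x| ≤ (‖x‖ + R) * Wc μ (fun _ => 1) t x := by
  unfold Wc
  rw [← integral_const_mul]
  refine (abs_integral_le_integral_abs).trans ?_
  refine integral_mono_ae (integrand_int μ (adm_coord i) ht x).abs
    ((integrand_int μ adm_one ht x).const_mul _) (hμR.mono fun z hz => ?_)
  simp only [abs_mul, one_mul, abs_of_pos (gaussD_pos ht (x - z))]
  refine mul_le_mul_of_nonneg_right ?_ (gaussD_pos ht (x - z)).le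
  have := abs_coord_le (x - z) i
  have := norm_sub_le x z
  linarith

lemma exp_int {a : ℝ} (ha : 0 < a) :
    Integrable (fun x : EuclideanSpace ℝ (Fin d) => exp (-a * ‖x‖ ^ 2)) := by
  apply Integrable.of_integral_ne_zero
  rw [GaussianFourier.integral_rexp_neg_mul_sq_norm ha]
  positivity

lemma dom_int {y : ℝ} (hy : 0 < y) (A : ℝ) :
    Integrable (fun x : EuclideanSpace ℝ (Fin d) =>
      A * ((1 + ‖x‖ ^ 2) * exp (-(‖x‖ ^ 2 / (16 * y))))) := by
  apply Integrable.const_mul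
  refine ((exp_int (d := d) (a := 1 / (32 * y)) (by positivity)).const_mul (1 + 32 * y)).mono'
    (Continuous.aestronglyMeasurable (by fun_prop)) (.of_forall fun x => ?_)
  rw [Real.norm_eq_abs, abs_of_nonneg (by positivity)]
  set s := ‖x‖ ^ 2
  have hs0 : 0 ≤ s := by positivity
  have hB : 1 + s ≤ (1 + 32 * y) * exp (s / (32 * y)) := by
    have h := Real.add_one_le_exp (s / (32 * y))
    have h3 : 0 ≤ s / (32 * y) := by positivity
    have h4 : s = 32 * y * (s / (32 * y)) := by field_simp
    calc 1 + s ≤ (1 + 32 * y) * (s / (32 * y) + 1) := by nlinarith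
      _ ≤ _ := by gcongr
  calc (1 + s) * exp (-(s / (16 * y))) ≤ (1 + 32 * y) * exp (s / (32 * y)) * exp (-(s / (16 * y))) := by
        gcongr
    _ = _ := by
        rw [mul_assoc, ← Real.exp_add]
        congr 2; field_simp; ring

lemma dom_int' {y : ℝ} (hy : 0 < y) (A : ℝ) {F : EuclideanSpace ℝ (Fin d) → ℝ}
    (hF : Continuous F) (h : ∀ x, |F x| ≤ A * ((1 + ‖x‖ ^ 2) * exp (-(‖x‖ ^ 2 / (16 * y))))) :
    Integrable F :=
  (dom_int hy A).mono' hF.aestronglyMeasurable (.of_forall h)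

include hμR in
lemma Wc_int {p : EuclideanSpace ℝ (Fin d) → ℝ} (hp : Adm p) {y : ℝ} (hy : 0 < y) :
    Integrable (Wc μ p y) := by
  obtain ⟨C, hC, h⟩ := Wc_bound μ hμR hp hy
  refine dom_int' hy C (Wc_cont μ hp hy) fun x => (h y (mem_Icc_self' hy) x).trans ?_
  have : exp (-(‖x‖ ^ 2 / (16 * y))) ≤ (1 + ‖x‖ ^ 2) * exp (-(‖x‖ ^ 2 / (16 * y))) := by
    have := (Real.exp_pos (-(‖x‖ ^ 2 / (16 * y))))
    nlinarith [sq_nonneg ‖x‖]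
  gcongr

lemma L_cont {t : ℝ} (ht : 0 < t) :
    Continuous fun x => -Real.log (Wc μ (fun _ => 1) t x) - 1 := by
  have h := (Wc_cont μ adm_one ht).log fun x => (Wc_pos μ ht x).ne'
  fun_prop

include hμR in
lemma LW_int {p : EuclideanSpace ℝ (Fin d) → ℝ} (hp : Adm p) {y : ℝ} (hy : 0 < y) :
    Integrable (fun x => (-Real.log (Wc μ (fun _ => 1) y x) - 1) * Wc μ p y x) := by
  obtain ⟨C, hC, h⟩ := Wc_bound μ hμR hp hy
  obtain ⟨A, hA, hl⟩ := log_bound μ hμR hy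
  refine dom_int' hy (A * C) ((L_cont μ hy).mul (Wc_cont μ hp hy)) fun x => ?_
  rw [abs_mul]
  calc _ ≤ (A * (1 + ‖x‖ ^ 2)) * (C * exp (-(‖x‖ ^ 2 / (16 * y)))) :=
        mul_le_mul (hl y (mem_Icc_self' hy) x) (h y (mem_Icc_self' hy) x) (abs_nonneg _)
          (by positivity)
    _ = _ := by ring

include hR hμR in
lemma fisher_int {y : ℝ} (hy : 0 < y) (i : Fin d) :
    Integrable (fun x => (Wc μ (fun w => w i) y x) ^ 2 / Wc μ (fun _ => 1) y x) := by
  obtain ⟨C, hC, h⟩ := Wc_bound μ hμR adm_one hy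
  refine dom_int' hy (2 * (1 + R ^ 2) * C)
    (((Wc_cont μ (adm_coord i) hy).pow 2).div (Wc_cont μ adm_one hy)
      fun x => (Wc_pos μ hy x).ne') fun x => ?_
  have hp := Wc_pos μ hy x
  have h1 := coord_bound μ hR hμR hy x i
  have h2 := (le_abs_self _).trans (h y (mem_Icc_self' hy) x)
  rw [abs_of_nonneg (by positivity), div_le_iff₀ hp]
  set f := Wc μ (fun _ => 1) y x
  set e := exp (-(‖x‖ ^ 2 / (16 * y)))
  have hx := norm_nonneg x
  calc (Wc μ (fun w => w i) y x) ^ 2 = |Wc μ (fun w => w i) y x| ^ 2 := (sq_abs _).symm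
    _ ≤ ((‖x‖ + R) * f) ^ 2 := by gcongr
    _ = (‖x‖ + R) ^ 2 * f * f := by ring
    _ ≤ (2 * (1 + R ^ 2) * (1 + ‖x‖ ^ 2)) * (C * e) * f := by
        gcongr
        nlinarith [sq_nonneg (‖x‖ - R), sq_nonneg (‖x‖ * R)]
    _ = _ := by ring

lemma gaussD_integral {t : ℝ} (ht : 0 < t) : ∫ x, gaussD d t x = 1 := by
  have e : ∀ x : EuclideanSpace ℝ (Fin d), gaussD d t x =
      (2 * π * t) ^ (-(d : ℝ) / 2) * exp (-(1 / (2 * t)) * ‖x‖ ^ 2) := fun x => by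
    unfold gaussD; congr 2; ring
  simp_rw [e]
  rw [integral_const_mul, GaussianFourier.integral_rexp_neg_mul_sq_norm (by positivity)]
  have : π / (1 / (2 * t)) = 2 * π * t := by field_simp
  rw [this, ← Real.rpow_add (by positivity)]
  simp; ring_nf; simp

include hμR in
lemma Wc_integral {t : ℝ} (ht : 0 < t) : ∫ x, Wc μ (fun _ => 1) t x = 1 := by
  unfold Wc
  obtain ⟨C, hC, h⟩ := adm_bound_x (d := d) adm_one ht R
  rw [integral_integral_swap]
  · simp_rw [one_mul]
    have : ∀ z : EuclideanSpace ℝ (Fin d), ∫ x, gaussD d t (x - z) = 1 := fun z => by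
      rw [integral_sub_right_eq_self (gaussD d t) z, gaussD_integral ht]
    simp [this]
  · have hi : Integrable (fun x : EuclideanSpace ℝ (Fin d) => C * exp (-(‖x‖ ^ 2 / (16 * t)))) := by
      convert! (exp_int (d := d) (a := 1 / (16 * t)) (by positivity)).const_mul C using 4
      ring
    refine (hi.comp_fst μ).mono' ?_ ?_
    · have h2 := gaussD_cont (d := d) t
      exact Continuous.aestronglyMeasurable (by unfold Function.uncurry; fun_prop)
    · have := (Measure.quasiMeasurePreserving_snd (μ := (volume : Measure (EuclideanSpace ℝ (Fin d))))
        (ν := μ)).ae hμR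
      exact this.mono fun q hq => h t (mem_Icc_self' ht) q.1 q.2 hq

include hR hμR in
lemma ibp {y : ℝ} (hy : 0 < y) (i : Fin d) :
    ∫ x, (-Real.log (Wc μ (fun _ => 1) y x) - 1) *
      (Wc μ (fun _ => 1) y x - (1 / y) * Wc μ (fun w => (w i) ^ 2) y x) =
    - ((1 / y) * ∫ x, (Wc μ (fun w => w i) y x) ^ 2 / Wc μ (fun _ => 1) y x) := by
  have key := integral_bilinear_hasLineDerivAt_right_eq_neg_left_of_integrable
    (μ := (volume : Measure (EuclideanSpace ℝ (Fin d))))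
    (B := ContinuousLinearMap.mul ℝ ℝ) (v := EuclideanSpace.single i 1)
    (f := fun x => -Real.log (Wc μ (fun _ => 1) y x) - 1)
    (f' := fun x => (1 / y) * (Wc μ (fun w => w i) y x / Wc μ (fun _ => 1) y x))
    (g := Wc μ (fun w => w i) y)
    (g' := fun x => Wc μ (fun _ => 1) y x - (1 / y) * Wc μ (fun w => (w i) ^ 2) y x)
    ?_ ?_ ?_ ?_ ?_
  · simp only [ContinuousLinearMap.mul_apply'] at key
    rw [key, ← integral_const_mul]
    congr 2; funext x; ring
  · simp only [ContinuousLinearMap.mul_apply']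
    refine ((fisher_int μ hR hμR hy i).const_mul (1 / y)).congr (.of_forall fun x => ?_)
    simp only; ring
  · simp only [ContinuousLinearMap.mul_apply']
    refine ((LW_int μ hμR adm_one hy).sub
      ((LW_int μ hμR (adm_coord_sq i) hy).const_mul (1 / y))).congr (.of_forall fun x => ?_)
    simp only [Pi.sub_apply]; ring
  · exact LW_int μ hμR (adm_coord i) hy
  · intro x _
    have h := Wc_line_one μ hy x i
    unfold HasLineDerivAt at h ⊢
    have h2 := (h.log (by simpa using (Wc_pos μ hy x).ne')).neg.sub_const 1
    convert! h2 using 1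
    simp; ring
  · intro x _
    exact Wc_line_coord μ hy x i

include hμR in
lemma ent_deriv {y : ℝ} (hy : 0 < y) :
    HasDerivAt (entG d μ) (∫ x, (-Real.log (Wc μ (fun _ => 1) y x) - 1) *
      (1 / (2 * y ^ 2) * Wc μ (fun w => ‖w‖ ^ 2) y x - d / (2 * y) * Wc μ (fun _ => 1) y x)) y := by
  obtain ⟨C1, hC1, h1⟩ := Wc_bound μ hμR adm_one hy
  obtain ⟨C2, hC2, h2⟩ := Wc_bound μ hμR adm_normsq hy
  obtain ⟨A, hA, hl⟩ := log_bound μ hμR hy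
  have he : entG d μ = fun s => ∫ x, Real.negMulLog (Wc μ (fun _ => 1) s x) := by
    funext s; unfold entG; rw [convG_eq]
  rw [he]
  refine (hasDerivAt_integral_of_dominated_loc_of_deriv_le (x₀ := y)
    (F := fun s x => Real.negMulLog (Wc μ (fun _ => 1) s x))
    (F' := fun y x => (-Real.log (Wc μ (fun _ => 1) y x) - 1) *
      (1 / (2 * y ^ 2) * Wc μ (fun w => ‖w‖ ^ 2) y x - d / (2 * y) * Wc μ (fun _ => 1) y x))
    (bound := fun x => (A * (1 / (2 * (y / 2) ^ 2) * C2 + d / (2 * (y / 2)) * C1)) *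
      ((1 + ‖x‖ ^ 2) * exp (-(‖x‖ ^ 2 / (16 * y)))))
    (Icc_nhds' hy) ?_ ?_ ?_ ?_ (dom_int hy _) ?_).2
  · filter_upwards [Icc_nhds' hy] with s hs
    have hs0 : 0 < s := by linarith [hs.1]
    exact (Real.continuous_negMulLog.comp (Wc_cont μ adm_one hs0)).aestronglyMeasurable
  · refine ((LW_int μ hμR adm_one hy).add (Wc_int μ hμR adm_one hy)).congr
      (.of_forall fun x => ?_)
    simp only [Pi.add_apply, Real.negMulLog]; ring
  · exact ((L_cont μ hy).mul (((Wc_cont μ adm_normsq hy).const_mul _).sub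
      ((Wc_cont μ adm_one hy).const_mul _))).aestronglyMeasurable
  · refine .of_forall fun x s hs => ?_
    have hs0 : 0 < s := by linarith [hs.1]
    have hs1 := hs.1
    rw [Real.norm_eq_abs, abs_mul]
    set e := exp (-(‖x‖ ^ 2 / (16 * y)))
    have b1 := h1 s hs x
    have b2 := h2 s hs x
    have b3 : |1 / (2 * s ^ 2) * Wc μ (fun w => ‖w‖ ^ 2) s x - d / (2 * s) * Wc μ (fun _ => 1) s x|
        ≤ 1 / (2 * (y / 2) ^ 2) * (C2 * e) + d / (2 * (y / 2)) * (C1 * e) := by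
      refine (abs_sub _ _).trans ?_
      rw [abs_mul, abs_mul (_ / _), abs_of_nonneg (by positivity : 0 ≤ 1 / (2 * s ^ 2)),
        abs_of_nonneg (by positivity : 0 ≤ (d : ℝ) / (2 * s))]
      gcongr
    calc _ ≤ (A * (1 + ‖x‖ ^ 2)) * (1 / (2 * (y / 2) ^ 2) * (C2 * e) + d / (2 * (y / 2)) * (C1 * e)) :=
          mul_le_mul (hl s hs x) b3 (abs_nonneg _) (by positivity)
      _ = _ := by ring
  · refine .of_forall fun x s hs => ?_
    have hs0 : 0 < s := by linarith [hs.1]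
    exact (Real.hasDerivAt_negMulLog (Wc_pos μ hs0 x).ne').comp s (Wc_deriv_t μ hs0 x)

include hR hμR in
lemma ent_deriv_eq {y : ℝ} (hy : 0 < y) :
    ∫ x, (-Real.log (Wc μ (fun _ => 1) y x) - 1) *
      (1 / (2 * y ^ 2) * Wc μ (fun w => ‖w‖ ^ 2) y x - d / (2 * y) * Wc μ (fun _ => 1) y x) =
    1 / 2 * ∑ i, (1 / y ^ 2) *
      ∫ x, (Wc μ (fun w => w i) y x) ^ 2 / Wc μ (fun _ => 1) y x := by
  have e : ∀ x, (-Real.log (Wc μ (fun _ => 1) y x) - 1) *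
      (1 / (2 * y ^ 2) * Wc μ (fun w => ‖w‖ ^ 2) y x - d / (2 * y) * Wc μ (fun _ => 1) y x) =
      -(1 / (2 * y)) * ∑ i : Fin d, (-Real.log (Wc μ (fun _ => 1) y x) - 1) *
      (Wc μ (fun _ => 1) y x - (1 / y) * Wc μ (fun w => (w i) ^ 2) y x) := fun x => by
    rw [Wc_sum_sq μ hy, ← Finset.mul_sum, Finset.sum_sub_distrib, ← Finset.mul_sum]
    simp
    field_simp
    ring
  simp_rw [e]
  rw [integral_const_mul, integral_finsetSum]
  · simp_rw [ibp μ hR hμR hy]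
    rw [Finset.mul_sum, Finset.mul_sum]
    refine Finset.sum_congr rfl fun i _ => ?_
    field_simp
  · intro i _
    refine ((LW_int μ hμR adm_one hy).sub
      ((LW_int μ hμR (adm_coord_sq i) hy).const_mul (1 / y))).congr (.of_forall fun x => ?_)
    simp only [Pi.sub_apply]; ring

include hR hμR in
lemma cs {y : ℝ} (hy : 0 < y) (i : Fin d) :
    (∫ x, |fderiv ℝ (convG d μ y) x (EuclideanSpace.single i 1)|) ^ 2 ≤
      (1 / y ^ 2) * ∫ x, (Wc μ (fun w => w i) y x) ^ 2 / Wc μ (fun _ => 1) y x := by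
  have hi := (Wc_int μ hμR (adm_coord i) hy).abs
  have hF := fisher_int μ hR hμR hy i
  have h1 : ∫ x, |fderiv ℝ (convG d μ y) x (EuclideanSpace.single i 1)| ≤
      ∫ x, (1 / y) * |Wc μ (fun w => w i) y x| := by
    refine integral_mono_of_nonneg (.of_forall fun x => abs_nonneg _) (hi.const_mul _)
      (.of_forall fun x => ?_)
    simp only
    by_cases hd : DifferentiableAt ℝ (convG d μ y) x
    · have a := (hd.hasFDerivAt.hasLineDerivAt (EuclideanSpace.single i 1)).lineDeriv
      have b := (Wc_line_one μ hy x i).lineDeriv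
      rw [convG_eq] at a ⊢
      rw [← a, b, abs_mul, abs_neg, abs_of_pos (by positivity : 0 < 1 / y)]
    · rw [fderiv_zero_of_not_differentiableAt hd]
      simp; positivity
  rw [integral_const_mul] at h1
  have h0 : 0 ≤ ∫ x, |fderiv ℝ (convG d μ y) x (EuclideanSpace.single i 1)| :=
    integral_nonneg fun x => abs_nonneg _
  set M := ∫ x, |Wc μ (fun w => w i) y x| with hM
  have h2 : ∫ x, 2 * M * |Wc μ (fun w => w i) y x| ≤
      ∫ x, ((Wc μ (fun w => w i) y x) ^ 2 / Wc μ (fun _ => 1) y x + M ^ 2 * Wc μ (fun _ => 1) y x) := by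
    refine integral_mono (hi.const_mul _) (hF.add ((Wc_int μ hμR adm_one hy).const_mul _))
      fun x => ?_
    have hp := Wc_pos μ hy x
    simp only
    rw [div_add' _ _ _ hp.ne', le_div_iff₀ hp, ← sq_abs]
    nlinarith [sq_nonneg (|Wc μ (fun w => w i) y x| - M * Wc μ (fun _ => 1) y x)]
  rw [integral_const_mul, integral_add hF ((Wc_int μ hμR adm_one hy).const_mul _),
    integral_const_mul, Wc_integral μ hμR hy, ← hM] at h2
  calc _ ≤ (1 / y * M) ^ 2 := by gcongr
    _ = 1 / y ^ 2 * M ^ 2 := by ring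
    _ ≤ _ := by
      gcongr
      nlinarith

end aux

theorem statement13 {d : ℕ} (μ : Measure (EuclideanSpace ℝ (Fin d)))
    [IsProbabilityMeasure μ] (K : Set (EuclideanSpace ℝ (Fin d)))
    (hK : IsCompact K) (hμK : μ Kᶜ = 0) (y : ℝ) (hy : 0 < y) :
    ∃ D : ℝ, HasDerivWithinAt (entG d μ) D (Set.Ioi y) y ∧
      1 / 2 * ∑ i : Fin d,
          (∫ x, |fderiv ℝ (convG d μ y) x (EuclideanSpace.single i 1)|) ^ 2 ≤ D := by
  obtain ⟨R, hR0⟩ := hK.isBounded.exists_norm_le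
  have hμR : ∀ᵐ z ∂μ, ‖z‖ ≤ max R 0 := by
    have : ∀ᵐ z ∂μ, z ∈ K := hμK
    exact this.mono fun z hz => (hR0 z hz).trans (le_max_left _ _)
  have hR : 0 ≤ max R 0 := le_max_right _ _
  refine ⟨_, (ent_deriv μ hμR hy).hasDerivWithinAt, ?_⟩
  rw [ent_deriv_eq μ hR hμR hy]
  gcongr with i
  exact cs μ hR hμR hy i
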